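/- In the Černý automaton C_n (n ≥ 2), for every word w over the alphabet {a, b} and every state q ∈ Z_n, the preimage of the singleton {q} under the map δ_w induced by w satisfies |δ_w⁻¹({q})| ≤ 1 + (number of occurrences of the letter b in w). -/

import Mathlib

/-- The two-letter alphabet of the Černý automaton. -/
inductive Letter
  | a
  | b
deriving DecidableEq

/-- The action of a letter of the Černý automaton `C_n` on the state set `ZMod n`:
`a` sends `i` to `i + 1 (mod n)`, and `b` sends `n - 1` to `0` and fixes every other state. -/
def step (n : ℕ) : Letter → ZMod n → ZMod n
  | Letter.a, p => p + 1
  | Letter.b, p => if p = -1 then 0 else p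

/-- The map `δ_w` induced by a word `w`, applying letters left to right. -/
def run (n : ℕ) : List Letter → ZMod n → ZMod n
  | [], p => p
  | x :: w, p => run n w (step n x p)

/-! The letter `a` is a permutation and `b` is injective away from the single state `-1`, so taking
preimages under `a` preserves cardinality and under `b` adds at most one state. The preimage under a
word is obtained by pulling back along its letters one at a time. -/

section InjOnCompl

variable {σ τ α : Type*}

theorem encard_preimage_le_of_injOn_compl {f : σ → τ} {E : Set σ} (hf : Eᶜ.InjOn f)
    (T : Set τ) : (f ⁻¹' T).encard ≤ T.encard + E.encard :=
  calc
    (f ⁻¹' T).encard ≤ (f ⁻¹' T \ E).encard + E.encard :=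
      Set.encard_le_encard_sdiff_add_encard _ _
    _ ≤ T.encard + E.encard := by
      gcongr
      exact Set.encard_le_encard_of_injOn (fun _ hp ↦ hp.1) (hf.mono fun _ hp ↦ hp.2)

theorem encard_preimage_foldl_le_of_injOn_compl {f : σ → α → σ} {E : α → Set σ}
    (hf : ∀ x, (E x)ᶜ.InjOn (f · x)) (w : List α) (T : Set σ) :
    ((w.foldl f ·) ⁻¹' T).encard ≤ T.encard + (w.map fun x ↦ (E x).encard).sum := by
  induction w with
  | nil => simp
  | cons x w ih =>
    calc
      ((f · x) ⁻¹' ((w.foldl f ·) ⁻¹' T)).encard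
          ≤ ((w.foldl f ·) ⁻¹' T).encard + (E x).encard :=
        encard_preimage_le_of_injOn_compl (hf x) _
      _ ≤ T.encard + (w.map fun y ↦ (E y).encard).sum + (E x).encard := by gcongr
      _ = T.encard + ((x :: w).map fun y ↦ (E y).encard).sum := by
        rw [List.map_cons, List.sum_cons, add_assoc, add_comm (E x).encard]

end InjOnCompl

theorem run_eq_foldl (n : ℕ) (w : List Letter) (p : ZMod n) :
    run n w p = w.foldl (fun q x ↦ step n x q) p := by
  induction w generalizing p with
  | nil => rfl
  | cons x _ ih => exact ih (step n x p)

/-- The exceptional set of a letter of `C_n`: a set of states off which the letter acts injectively,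
whose size bounds the growth of a preimage. For `b`, which merges `-1` with `0`, either state would
do; `-1` is chosen because `b` fixes all the others. -/
def exceptionalSet (n : ℕ) : Letter → Set (ZMod n)
  | Letter.a => ∅
  | Letter.b => {-1}

theorem injOn_step_compl_exceptionalSet (n : ℕ) (x : Letter) :
    (exceptionalSet n x)ᶜ.InjOn (step n x) := by
  cases x with
  | a => exact (add_left_injective 1).injOn
  | b =>
    have step_b_eq_self {p : ZMod n} (hp : p ∈ (exceptionalSet n Letter.b)ᶜ) :
        step n Letter.b p = p := if_neg hp
    intro p hp q hq hpq
    rwa [step_b_eq_self hp, step_b_eq_self hq] at hpq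

theorem sum_encard_exceptionalSet (n : ℕ) (w : List Letter) :
    (w.map fun x ↦ (exceptionalSet n x).encard).sum = w.count Letter.b := by
  induction w with
  | nil => simp
  | cons x w ih =>
    rw [List.map_cons, List.sum_cons, ih]
    cases x <;> simp [exceptionalSet, add_comm]

theorem cerny_singleton_preimage_le_general (n : ℕ) (w : List Letter) (T : Set (ZMod n)) :
    (run n w ⁻¹' T).encard ≤ T.encard + w.count Letter.b := by
  rw [funext (run_eq_foldl n w), ← sum_encard_exceptionalSet n w]
  exact encard_preimage_foldl_le_of_injOn_compl (injOn_step_compl_exceptionalSet n) w T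

/-- In the Černý automaton `C_n` (`n ≥ 2`), for every word `w` and state `q`, the
preimage of the singleton `{q}` under `δ_w` has at most `1 + (number of b's in w)`
elements. -/
theorem cerny_singleton_preimage_le (n : ℕ) (hn : 2 ≤ n) (w : List Letter) (q : ZMod n) :
    {p : ZMod n | run n w p = q}.ncard ≤ 1 + w.count Letter.b := by
  have h := Set.encard_singleton q ▸ cerny_singleton_preimage_le_general n w {q}
  exact (Set.encard_le_coe_iff_finite_ncard_le.mp (mod_cast h)).2
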